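/- arXiv:1303.0503 — 2 statements merged into one kernel-verified Lean document; each statement's English description precedes it below -/
import Mathlib

section
/- Let p = 3 and q = 3^m where m ≥ 6 is an even integer, and let π be a generator of the multiplicative group F_q^×. For (α,β,γ) ∈ F_q³ ∖ {(0,0,0)} let w(α,β,γ) = #{ i ∈ {0,1,…,q−2} : Tr(α·π^{2i} + β·π^{4i} + γ·π^{10i}) ≠ 0 } be the Hamming weight of the corresponding codeword of the cyclic code of length q−1 with nonzeros π^{−2}, π^{−4}, π^{−10}. Then: the number of triples (α,β,γ) ∈ F_q³ ∖ {(0,0,0)} with w(α,β,γ) = 2·3^{m−1} equals n_{1,1} + n_{−1,1} + n_{1,3} + n_{−1,3}; and for each j ∈ {0,2,4}, the number of such triples with w(α,β,γ) = 2·3^{m−1} − 2·3^{(m+j)/2 − 1} equals n_{1,j}, and the number with w(α,β,γ) = 2·3^{m−1} + 2·3^{(m+j)/2 − 1} equals n_{−1,j}. -/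
/-!
The exponent `Tr (α x² + β x ^ (p + 1) + γ x ^ (p² + 1))` is a quadratic form over `𝔽_p`. After
diagonalization its exponential sum `S` is a product of one-variable quadratic Gauss sums, whose
squares are `χ(-1) p`. For `p ≡ 3 mod 4` and even `m` this gives `S² = (-1) ^ j p ^ (m + j)` with
`j` the dimension of the radical, so `S` is `± p ^ ((m + j) / 2)`, times `i` when `j` is odd. The
radical is contained in the zero set of a nonzero polynomial of degree at most `p ^ 4`, so `j ≤ 4`.
Finally, the nontrivial values of the additive character of `𝔽_3` have real part `-1/2`, so for
`p = 3` the weight `w` satisfies `3 w = 2 (3 ^ m - Re S)`. Hence `w` determines `S` when `j` is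
even, while all sums with `j` odd, being purely imaginary, share the weight `2 · 3 ^ (m - 1)`.
-/

open Complex Finset

noncomputable def zetaPow (p : ℕ) (a : ZMod p) : ℂ :=
  Complex.exp (2 * Real.pi * Complex.I * (a.val : ℂ) / (p : ℂ))

noncomputable def expSum (p m : ℕ) [Fact p.Prime]
    (α β γ : GaloisField p m) : ℂ :=
  letI : Fintype (GaloisField p m) := Fintype.ofFinite _
  ∑ x : GaloisField p m,
    zetaPow p ((Algebra.trace (ZMod p) (GaloisField p m))
      (α * x ^ 2 + β * x ^ (p + 1) + γ * x ^ (p ^ 2 + 1)))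

noncomputable def nval (p m : ℕ) (ε : ℤ) (j : ℕ) : ℂ :=
  if j % 2 = 0 then (ε : ℂ) * ((Real.sqrt ((p : ℝ) ^ (m + j)) : ℝ) : ℂ)
  else (ε : ℂ) * Complex.I * ((Real.sqrt ((p : ℝ) ^ (m + j)) : ℝ) : ℂ)

noncomputable def nn (p m : ℕ) [Fact p.Prime] (ε : ℤ) (j : ℕ) : ℕ :=
  {t : GaloisField p m × GaloisField p m × GaloisField p m |
    t ≠ (0, 0, 0) ∧ expSum p m t.1 t.2.1 t.2.2 = nval p m ε j}.ncard

section QuadraticExponentialSum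

variable {K V R : Type*} [Field K] [Fintype K] [AddCommGroup V] [Module K V] [Fintype V]
  [CommRing R]

theorem addChar_sum_eq_prod {ι A M : Type*} [AddCommMonoid A] [CommMonoid M] (ψ : AddChar A M)
    (s : Finset ι) (f : ι → A) : ψ (∑ i ∈ s, f i) = ∏ i ∈ s, ψ (f i) :=
  map_prod ψ.toMonoidHom (fun i => Multiplicative.ofAdd (f i)) s

theorem sum_addChar_weightedSumSquares {ι : Type*} [Fintype ι] [DecidableEq ι] (ψ : AddChar K R)
    (w : ι → K) :
    ∑ v, ψ (QuadraticMap.weightedSumSquares K w v) = ∏ i, ∑ x, ψ (w i * x ^ 2) := by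
  simp [QuadraticMap.weightedSumSquares_apply, addChar_sum_eq_prod, Finset.prod_univ_sum,
    Fintype.piFinset_univ, sq]

variable [DecidableEq K] [IsDomain R]

theorem sum_addChar_sq_eq_gaussSum (hK : ringChar K ≠ 2) {ψ : AddChar K R} (hψ : ψ ≠ 1) :
    ∑ x, ψ (x ^ 2) = gaussSum ((quadraticChar K).ringHomComp (algebraMap ℤ R)) ψ := by
  have card_sqrts (a : K) : (#{x : K | x ^ 2 = a} : R) = quadraticChar K a + 1 := by
    have h := quadraticChar_card_sqrts hK a
    simp only [Set.toFinset_ofPred] at h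
    exact_mod_cast congrArg (Int.cast : ℤ → R) h
  calc ∑ x, ψ (x ^ 2) = ∑ a, ∑ x with x ^ 2 = a, ψ a := (sum_fiberwise' _ _ _).symm
    _ = ∑ a, (quadraticChar K a * ψ a + ψ a) := by
        simp only [sum_const, nsmul_eq_mul, card_sqrts, add_one_mul]
    _ = _ := by simp [sum_add_distrib, AddChar.sum_eq_zero_of_ne_one hψ, gaussSum]

theorem sq_sum_addChar_mul_sq (hK : ringChar K ≠ 2) (hR : ringChar R ≠ 2) {ψ : AddChar K R}
    (hψ : ψ.IsPrimitive) {a : K} (ha : a ≠ 0) :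
    (∑ x, ψ (a * x ^ 2)) ^ 2 = quadraticChar K (-1) * Fintype.card K := by
  have nontrivial : (quadraticChar K).ringHomComp (algebraMap ℤ R) ≠ 1 := by
    obtain ⟨b, hb⟩ := quadraticChar_exists_neg_one' hK
    exact MulChar.ne_one_iff.2 ⟨b, by simpa [hb] using Ring.neg_one_ne_one_of_char_ne_two hR⟩
  have primitive : (ψ.mulShift a).IsPrimitive := .of_ne_one (hψ ha)
  simp_rw [← AddChar.mulShift_apply (ψ := ψ)]
  rw [sum_addChar_sq_eq_gaussSum hK (hψ ha),
    gaussSum_sq nontrivial ((quadraticChar_isQuadratic K).comp _) primitive]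
  simp

theorem sq_sum_addChar_quadraticForm (hK : ringChar K ≠ 2) (hR : ringChar R ≠ 2)
    {ψ : AddChar K R} (hψ : ψ.IsPrimitive) (Q : QuadraticForm K V) :
    (∑ x, ψ (Q x)) ^ 2 =
      (quadraticChar K (-1)) ^ (Module.finrank K V - Module.finrank K Q.radical) *
        (Fintype.card K) ^ (Module.finrank K V + Module.finrank K Q.radical) := by
  have h2 : (2 : K) ≠ 0 := Ring.two_ne_zero hK
  let _ : NeZero (2 : K) := ⟨h2⟩
  let _ : Invertible (2 : K) := invertibleOfNonzero h2
  obtain ⟨w, ⟨e⟩⟩ := Q.equivalent_weightedSumSquares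
  have card_zero : #{i | w i = 0} = Module.finrank K Q.radical := by
    rw [QuadraticForm.finrank_radical_of_equiv_weightedSumSquares ⟨e⟩, Set.ncard_eq_toFinset_card']
    simp
  have card_ne_zero : #{i | w i ≠ 0} = Module.finrank K V - Module.finrank K Q.radical := by
    have := card_filter_add_card_filter_not (s := univ) (w · = 0)
    rw [card_zero, card_univ, Fintype.card_fin] at this
    lia
  have factor (i) : (∑ x, ψ (w i * x ^ 2)) ^ 2 =
      if w i = 0 then (Fintype.card K : R) ^ 2 else quadraticChar K (-1) * Fintype.card K := by
    split_ifs with h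
    · simp [h]
    · exact sq_sum_addChar_mul_sq hK hR hψ h
  calc (∑ x, ψ (Q x)) ^ 2 = (∏ i, ∑ x, ψ (w i * x ^ 2)) ^ 2 := by
        rw [← sum_addChar_weightedSumSquares]
        simp_rw [← e.map_app]
        rw [← e.toEquiv.sum_comp]; rfl
    _ = ((Fintype.card K : R) ^ 2) ^ #{i | w i = 0} *
          (quadraticChar K (-1) * Fintype.card K) ^ #{i | w i ≠ 0} := by
        simp_rw [← prod_pow, factor, prod_ite, prod_const]
    _ = _ := by
        have := Q.radical.finrank_le
        rw [card_zero, card_ne_zero, show Module.finrank K V + Module.finrank K Q.radical =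
          Module.finrank K V - Module.finrank K Q.radical + 2 * Module.finrank K Q.radical by lia]
        ring

end QuadraticExponentialSum

section DembowskiOstrom

variable (K : Type*) {F : Type*} [Field K] [Fintype K] [Field F] [Algebra K F]

/-- The quadratic form `x ↦ Tr (∑ i, a i * x ^ (q ^ i + 1))` over `K`, where `q = #K`: the trace of
the Dembowski–Ostrom polynomial with coefficients `a`. For `K = ZMod p` and three coefficients it is
the exponent of `expSum`. -/
noncomputable def dembowskiOstromForm {d : ℕ} (a : Fin (d + 1) → F) : QuadraticForm K F :=
  ((Algebra.traceForm K F).compLeft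
    (∑ i, a i • (FiniteField.frobeniusAlgHom K F ^ (i : ℕ)).toLinearMap)).toQuadraticMap

variable {K}

open Polynomial

theorem dembowskiOstromForm_apply {d : ℕ} (a : Fin (d + 1) → F) (x : F) :
    dembowskiOstromForm K a x =
      Algebra.trace K F (∑ i, a i * x ^ (Fintype.card K ^ (i : ℕ) + 1)) := by
  simp [dembowskiOstromForm, FiniteField.coe_frobeniusAlgHom, pow_iterate, pow_succ, mul_assoc]

theorem polar_dembowskiOstromForm {d : ℕ} (a : Fin (d + 1) → F) (x y : F) :
    QuadraticMap.polar (dembowskiOstromForm K a) x y = Algebra.trace K F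
      (∑ i, (a i * x ^ Fintype.card K ^ (i : ℕ) * y + a i * x * y ^ Fintype.card K ^ (i : ℕ))) := by
  rw [dembowskiOstromForm, LinearMap.BilinMap.polar_toQuadraticMap, sum_add_distrib, map_add]
  simp [FiniteField.coe_frobeniusAlgHom, pow_iterate, mul_right_comm]

theorem trace_pow_card_pow [Algebra.IsAlgebraic K F] (x : F) (n : ℕ) :
    Algebra.trace K F (x ^ Fintype.card K ^ n) = Algebra.trace K F x := by
  have frobenius_iterate := FiniteField.coe_frobeniusAlgEquivOfAlgebraic_iterate K F n
  rw [← AlgEquiv.coe_pow] at frobenius_iterate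
  rw [← Algebra.trace_eq_of_algEquiv (FiniteField.frobeniusAlgEquivOfAlgebraic K F ^ n) x,
    frobenius_iterate]

/-- A linearized polynomial vanishing on the radical of `dembowskiOstromForm K a` when `q = #K`.
The polar form is `(x, y) ↦ Tr (L x * y)`, where
`L x = ∑ i, (a i * x ^ q ^ i + (a i * x) ^ q ^ (-i))`; this polynomial is `(L x) ^ q ^ d`, which has
no negative Frobenius powers. -/
noncomputable def radicalPolynomial (q : ℕ) {d : ℕ} (a : Fin (d + 1) → F) : F[X] :=
  ∑ i, (C (a i ^ q ^ d) * X ^ q ^ (d + i) + C (a i ^ q ^ (d - i)) * X ^ q ^ (d - i))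

variable {d : ℕ} {a : Fin (d + 1) → F}

theorem natDegree_radicalPolynomial_le {q : ℕ} (hq : 0 < q) :
    (radicalPolynomial q a).natDegree ≤ q ^ (2 * d) := by
  refine natDegree_sum_le_of_forall_le _ _ fun i _ => natDegree_add_le_of_degree_le ?_ ?_ <;>
    exact (natDegree_C_mul_X_pow_le _ _).trans (Nat.pow_le_pow_right hq (by lia))

theorem coeff_radicalPolynomial {q : ℕ} (hq : 1 < q) (i : Fin (d + 1)) :
    (radicalPolynomial q a).coeff (q ^ (d + i)) =
      if i = 0 then 2 * a i ^ q ^ d else a i ^ q ^ d := by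
  have upper (k : Fin (d + 1)) : d + i = d + k ↔ i = k := by lia
  have lower (k : Fin (d + 1)) : d + i = d - k ↔ i = k ∧ i = 0 := by lia
  simp only [radicalPolynomial, finsetSum_coeff, coeff_add, coeff_C_mul_X_pow,
    Nat.pow_right_inj hq, upper, lower, sum_add_distrib]
  split_ifs with h
  · simp [h, two_mul]
  · simp [h]

theorem radicalPolynomial_ne_zero {q : ℕ} (hq : 1 < q) (hF : ringChar F ≠ 2) (ha : a ≠ 0) :
    radicalPolynomial q a ≠ 0 := by
  obtain ⟨i, hi⟩ := Function.ne_iff.1 ha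
  have hi' : a i ^ q ^ d ≠ 0 := pow_ne_zero _ hi
  refine fun h => ?_
  have := coeff_radicalPolynomial hq (a := a) i
  rw [h, coeff_zero] at this
  split_ifs at this
  · exact mul_ne_zero (Ring.two_ne_zero hF) hi' this.symm
  · exact hi' this.symm

variable [Finite F]

theorem trace_eval_radicalPolynomial_mul (x y : F) :
    Algebra.trace K F ((radicalPolynomial (Fintype.card K) a).eval x * y ^ Fintype.card K ^ d) =
      QuadraticMap.polar (dembowskiOstromForm K a) x y := by
  rw [polar_dembowskiOstromForm, radicalPolynomial, eval_finsetSum, Finset.sum_mul, map_sum,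
    map_sum]
  refine sum_congr rfl fun i _ => ?_
  have exponent_add : (i : ℕ) + (d - i) = d := by lia
  rw [map_add, ← trace_pow_card_pow (a i * x ^ _ * y) d,
    ← trace_pow_card_pow (a i * x * y ^ _) (d - i), ← map_add]
  congr 1
  simp only [eval_add, eval_mul, eval_C, eval_pow, eval_X, mul_pow, ← pow_mul, ← pow_add,
    exponent_add, add_mul, add_comm d]

theorem eval_radicalPolynomial_eq_zero {x : F} (hx : x ∈ (dembowskiOstromForm K a).radical) :
    (radicalPolynomial (Fintype.card K) a).eval x = 0 := by
  have frobenius_surjective : Function.Surjective (· ^ Fintype.card K ^ d : F → F) := by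
    rw [← FiniteField.coe_frobeniusAlgEquivOfAlgebraic_iterate K F]
    exact (FiniteField.frobeniusAlgEquivOfAlgebraic K F).surjective.iterate d
  refine (traceForm_nondegenerate K F).1 _ fun z => ?_
  obtain ⟨y, rfl⟩ := frobenius_surjective z
  rw [Algebra.traceForm_apply, trace_eval_radicalPolynomial_mul]
  exact DFunLike.congr_fun (QuadraticMap.radical_le_ker_polarBilin hx) y

theorem finrank_radical_dembowskiOstromForm_le (hF : ringChar F ≠ 2) (ha : a ≠ 0) :
    Module.finrank K (dembowskiOstromForm K a).radical ≤ 2 * d := by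
  classical
  let _ := Fintype.ofFinite F
  have hq := Fintype.one_lt_card (α := K)
  have hP : radicalPolynomial (Fintype.card K) a ≠ 0 := radicalPolynomial_ne_zero hq hF ha
  have radical_subset : ((dembowskiOstromForm K a).radical : Set F) ⊆
      (radicalPolynomial (Fintype.card K) a).rootSet F := fun x hx => by
    simpa [mem_rootSet, hP] using eval_radicalPolynomial_eq_zero hx
  rw [← Nat.pow_le_pow_iff_right hq, ← Module.card_eq_pow_finrank, ← Nat.card_eq_fintype_card]
  calc Nat.card (dembowskiOstromForm K a).radical
      ≤ ((radicalPolynomial (Fintype.card K) a).rootSet F).ncard :=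
        Set.ncard_le_ncard radical_subset
    _ ≤ (radicalPolynomial (Fintype.card K) a).natDegree := ncard_rootSet_le _ _
    _ ≤ _ := natDegree_radicalPolynomial_le hq.le

end DembowskiOstrom

section NVal

variable {p m j : ℕ}

theorem nval_sq (p m : ℕ) (ε : ℤˣ) (j : ℕ) :
    nval p m ε j ^ 2 = (-1) ^ j * (p : ℂ) ^ (m + j) := by
  have sqrt_sq : ((√((p : ℝ) ^ (m + j)) : ℝ) : ℂ) ^ 2 = (p : ℂ) ^ (m + j) := by
    rw [← Complex.ofReal_pow, Real.sq_sqrt (by positivity)]; push_cast; rfl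
  have eps_sq : ((ε : ℤ) : ℂ) ^ 2 = 1 := by
    rw [← Int.cast_pow, ← Units.val_pow_eq_pow_val, Int.units_sq, Units.val_one, Int.cast_one]
  rw [nval]
  split_ifs with h
  · rw [mul_pow, eps_sq, sqrt_sq, (Nat.even_iff.2 h).neg_one_pow]
  · rw [mul_pow, mul_pow, eps_sq, sqrt_sq, I_sq,
      (Nat.not_even_iff_odd.1 (mt Nat.even_iff.1 h)).neg_one_pow, one_mul]

theorem nval_eq_mul_nval_one (p m : ℕ) (ε : ℤ) (j : ℕ) : nval p m ε j = ε * nval p m 1 j := by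
  unfold nval
  split_ifs <;> simp [mul_assoc]

theorem nval_of_even (p : ℕ) (hm : Even m) (hj : Even j) (ε : ℤ) :
    nval p m ε j = ((ε * (p : ℝ) ^ ((m + j) / 2) : ℝ) : ℂ) := by
  have sqrt_pow : √((p : ℝ) ^ (m + j)) = (p : ℝ) ^ ((m + j) / 2) := by
    rw [Real.sqrt_eq_iff_mul_self_eq (by positivity) (by positivity), ← pow_add, ← two_mul,
      Nat.two_mul_div_two_of_even (hm.add hj)]
  rw [nval, if_pos (Nat.even_iff.1 hj), sqrt_pow]
  push_cast; rfl

theorem re_nval_of_odd (p m : ℕ) (hj : Odd j) (ε : ℤ) : (nval p m ε j).re = 0 := by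
  rw [nval, if_neg (by simpa [← Nat.odd_iff] using hj), re_mul_ofReal]
  simp

theorem re_nval_ne_zero (hp : p ≠ 0) (hm : Even m) (hj : Even j) (ε : ℤˣ) :
    (nval p m ε j).re ≠ 0 := by
  rw [nval_of_even p hm hj, ofReal_re]
  exact mul_ne_zero (by simp) (by positivity)

theorem nval_injective (hp : 1 < p) (m : ℕ) :
    Function.Injective fun i : ℤˣ × ℕ => nval p m i.1 i.2 := by
  rintro ⟨ε, j⟩ ⟨δ, k⟩ (h : nval p m ε j = nval p m δ k)
  have norm_sq (ε : ℤˣ) (j : ℕ) : ‖nval p m ε j‖ ^ 2 = (p : ℝ) ^ (m + j) := by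
    rw [← norm_pow, nval_sq]; simp
  have pow_eq : p ^ (m + j) = p ^ (m + k) := by
    exact_mod_cast (norm_sq ε j).symm.trans (h ▸ norm_sq δ k)
  obtain rfl : j = k := by simpa using Nat.pow_right_injective hp pow_eq
  have nval_one_ne_zero : nval p m 1 j ≠ 0 := by
    have : ‖nval p m 1 j‖ ^ 2 ≠ 0 := by
      rw [← Units.val_one, norm_sq]; positivity
    simpa using this
  rw [nval_eq_mul_nval_one, nval_eq_mul_nval_one p m δ] at h
  have eps_eq := mul_right_cancel₀ nval_one_ne_zero h
  simpa [Units.ext_iff] using eps_eq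

end NVal

section ExponentialSum

open Module

theorem zetaPow_eq_stdAddChar {p : ℕ} [NeZero p] (a : ZMod p) :
    zetaPow p a = ZMod.stdAddChar a := by
  have h := ZMod.stdAddChar_coe (N := p) (a.val : ℤ)
  rw [Int.cast_natCast, ZMod.natCast_zmod_val] at h
  rw [h, zetaPow, Int.cast_natCast]

variable {p m : ℕ} [Fact p.Prime]

theorem expSum_eq_sum_stdAddChar [Fintype (GaloisField p m)] (α β γ : GaloisField p m) :
    expSum p m α β γ =
      ∑ x, ZMod.stdAddChar (dembowskiOstromForm (ZMod p) ![α, β, γ] x) := by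
  simp only [expSum, zetaPow_eq_stdAddChar, dembowskiOstromForm_apply, ZMod.card]
  congr! 4
  simp [Fin.sum_univ_three]

/-- The corank of the quadratic form with exponential sum `expSum p m α β γ`, i.e. the dimension of
its radical; it plays the role of `j` in `nval p m ε j`. -/
noncomputable def corank (α β γ : GaloisField p m) : ℕ :=
  finrank (ZMod p) (dembowskiOstromForm (ZMod p) ![α, β, γ]).radical

theorem corank_le_four (hp : p ≠ 2) {α β γ : GaloisField p m} (h : (α, β, γ) ≠ (0, 0, 0)) :
    corank α β γ ≤ 4 := by
  have char_ne_two : ringChar (GaloisField p m) ≠ 2 := by rwa [ringChar.eq (GaloisField p m) p]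
  exact finrank_radical_dembowskiOstromForm_le char_ne_two (by simpa using h)

theorem expSum_sq (hp : p % 4 = 3) (hm : Even m) (hm0 : m ≠ 0) (α β γ : GaloisField p m) :
    expSum p m α β γ ^ 2 = (-1) ^ corank α β γ * (p : ℂ) ^ (m + corank α β γ) := by
  let _ := Fintype.ofFinite (GaloisField p m)
  have char_ne_two : ringChar (ZMod p) ≠ 2 := by rw [ZMod.ringChar_zmod_n]; lia
  have neg_one_nonsquare : quadraticChar (ZMod p) (-1) = -1 := by
    rw [quadraticChar_neg_one_iff_not_isSquare, FiniteField.isSquare_neg_one_iff, ZMod.card]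
    lia
  have corank_le : corank α β γ ≤ m :=
    (Submodule.finrank_le _).trans_eq (GaloisField.finrank p hm0)
  have parity : (-1 : ℂ) ^ (m - corank α β γ) = (-1) ^ corank α β γ :=
    neg_one_pow_congr (by simp [Nat.even_sub corank_le, hm])
  rw [expSum_eq_sum_stdAddChar, sq_sum_addChar_quadraticForm char_ne_two (by simp)
    (ZMod.isPrimitive_stdAddChar p), GaloisField.finrank p hm0, neg_one_nonsquare, ZMod.card]
  rw [← corank, Int.cast_neg, Int.cast_one, parity]

theorem exists_expSum_eq_nval_corank (hp : p % 4 = 3) (hm : Even m) (hm0 : m ≠ 0)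
    (α β γ : GaloisField p m) :
    ∃ ε : ℤˣ, expSum p m α β γ = nval p m ε (corank α β γ) := by
  have sq_eq : expSum p m α β γ ^ 2 = nval p m (1 : ℤˣ) (corank α β γ) ^ 2 := by
    rw [expSum_sq hp hm hm0, nval_sq]
  obtain h | h := sq_eq_sq_iff_eq_or_eq_neg.1 sq_eq
  · exact ⟨1, h⟩
  · exact ⟨-1, by rw [h, nval_eq_mul_nval_one p m ((-1 : ℤˣ) : ℤ)]; simp⟩

theorem expSum_re_eq_zero_iff (hp : p % 4 = 3) (hm : Even m) (hm0 : m ≠ 0)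
    {α β γ : GaloisField p m} (h : (α, β, γ) ≠ (0, 0, 0)) :
    (expSum p m α β γ).re = 0 ↔
      ∃ i ∈ (univ ×ˢ {1, 3} : Finset (ℤˣ × ℕ)), expSum p m α β γ = nval p m i.1 i.2 := by
  constructor
  · intro hre
    obtain ⟨ε, hε⟩ := exists_expSum_eq_nval_corank hp hm hm0 α β γ
    have corank_odd : ¬ Even (corank α β γ) := fun hc =>
      re_nval_ne_zero (by lia) hm hc ε (hε ▸ hre)
    have corank_le : corank α β γ ≤ 4 := corank_le_four (by lia) h
    refine ⟨(ε, corank α β γ), ?_, hε⟩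
    simp only [mem_product, mem_univ, true_and, mem_insert, mem_singleton]
    grind
  · rintro ⟨⟨ε, j⟩, hj, hε⟩
    have j_odd : Odd j := by
      obtain rfl | rfl : j = 1 ∨ j = 3 := by simpa using (mem_product.1 hj).2
      all_goals decide
    rw [hε, re_nval_of_odd p m j_odd]

theorem expSum_eq_nval_iff_re_eq (hp : p % 4 = 3) (hm : Even m) (hm0 : m ≠ 0)
    {j : ℕ} (hj : Even j) (ε : ℤˣ) (α β γ : GaloisField p m) :
    expSum p m α β γ = nval p m ε j ↔
      (expSum p m α β γ).re = (ε : ℤ) * (p : ℝ) ^ ((m + j) / 2) := by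
  have nval_eq := nval_of_even p hm hj ε
  refine ⟨fun h => by rw [h, nval_eq, ofReal_re], fun hre => ?_⟩
  obtain ⟨δ, hδ⟩ := exists_expSum_eq_nval_corank hp hm hm0 α β γ
  have corank_even : Even (corank α β γ) := by
    by_contra hc
    apply re_nval_ne_zero (by lia) hm hj ε (p := p)
    rw [nval_eq, ofReal_re, ← hre, hδ, re_nval_of_odd p m (Nat.not_even_iff_odd.1 hc)]
  have expSum_real : ((expSum p m α β γ).re : ℂ) = expSum p m α β γ := by
    rw [hδ, nval_of_even p hm corank_even, ofReal_re]
  rw [← expSum_real, hre, nval_eq]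

end ExponentialSum

section Weight

open scoped ComplexConjugate

theorem re_stdAddChar_zmod_three (a : ZMod 3) :
    (ZMod.stdAddChar a).re = if a = 0 then 1 else -1 / 2 := by
  have nontrivial : (ZMod.stdAddChar : AddChar (ZMod 3) ℂ) ≠ 1 := by
    simpa using ZMod.isPrimitive_stdAddChar 3 one_ne_zero
  have sum_eq_zero : ZMod.stdAddChar (0 : ZMod 3) + ZMod.stdAddChar (1 : ZMod 3) +
      ZMod.stdAddChar (2 : ZMod 3) = 0 :=
    (Fin.sum_univ_three _).symm.trans (AddChar.sum_eq_zero_of_ne_one nontrivial)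
  have conj_eq : ZMod.stdAddChar (2 : ZMod 3) = conj (ZMod.stdAddChar (1 : ZMod 3)) :=
    AddChar.map_neg_eq_conj _ 1
  have re_one : (ZMod.stdAddChar (1 : ZMod 3)).re = -1 / 2 := by
    have := congrArg re sum_eq_zero
    simp only [AddChar.map_zero_eq_one, conj_eq, add_re, one_re, conj_re, zero_re] at this
    linarith
  obtain rfl | rfl | rfl : a = 0 ∨ a = 1 ∨ a = 2 := by decide +revert
  · simp
  · exact re_one
  · exact (congrArg re conj_eq).trans re_one

theorem three_mul_card_filter_ne_zero {X : Type*} [Fintype X] (f : X → ZMod 3) :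
    (3 * #{x | f x ≠ 0} : ℝ) = 2 * (Fintype.card X - (∑ x, ZMod.stdAddChar (f x)).re) := by
  have card_eq := card_filter_add_card_filter_not (s := univ) (f · = 0)
  rw [re_sum]
  simp_rw [re_stdAddChar_zmod_three, sum_ite, sum_const, ← Finset.card_univ, ← card_eq]
  simp only [ne_eq, Nat.cast_add, nsmul_eq_mul, mul_one, add_sub_add_left_eq_sub]
  ring

theorem card_filter_range_pow {F : Type*} [Field F] [Fintype F] {π : Fˣ}
    (hπ : ∀ u : Fˣ, u ∈ Subgroup.zpowers π) (P : F → Prop) [DecidablePred P] (h0 : ¬ P 0) :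
    #{i ∈ range (Fintype.card F - 1) | P ((π : F) ^ i)} = #{x | P x} := by
  classical
  have order : orderOf π = Fintype.card F - 1 := by
    rw [orderOf_eq_card_of_forall_mem_zpowers hπ, Nat.card_eq_fintype_card, Fintype.card_units]
  have injective_on : Set.InjOn (fun i : ℕ => (π : F) ^ i) (range (Fintype.card F - 1)) := by
    intro i hi j hj hij
    rw [← order, coe_range] at hi hj
    exact pow_injOn_Iio_orderOf hi hj (Units.ext (by simpa using hij))
  rw [← card_image_of_injOn (injective_on.mono (by exact_mod_cast filter_subset _ _))]
  congr 1
  ext x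
  simp only [mem_image, mem_filter, mem_univ, true_and]
  refine ⟨by rintro ⟨i, ⟨-, hi⟩, rfl⟩; exact hi, fun hx => ?_⟩
  have hx0 : x ≠ 0 := by rintro rfl; exact h0 hx
  obtain ⟨i, hi, hix⟩ := mem_image.1 (mem_zpowers_iff_mem_range_orderOf.1 (hπ (Units.mk0 x hx0)))
  obtain rfl : (π : F) ^ i = x := by simpa using congrArg Units.val hix
  exact ⟨i, ⟨order ▸ hi, hx⟩, rfl⟩

variable {m : ℕ}

/-- The Hamming weight of the codeword `(Tr (α π ^ 2i + β π ^ 4i + γ π ^ 10i))` for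
`0 ≤ i < 3 ^ m - 1`. -/
noncomputable def codewordWeight (π : (GaloisField 3 m)ˣ) (α β γ : GaloisField 3 m) : ℕ :=
  #{i ∈ range (3 ^ m - 1) | Algebra.trace (ZMod 3) (GaloisField 3 m)
    (α * (π : GaloisField 3 m) ^ (2 * i) + β * (π : GaloisField 3 m) ^ (4 * i) +
      γ * (π : GaloisField 3 m) ^ (10 * i)) ≠ 0}

theorem three_mul_codewordWeight (hm : m ≠ 0) {π : (GaloisField 3 m)ˣ}
    (hπ : ∀ u, u ∈ Subgroup.zpowers π) (α β γ : GaloisField 3 m) :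
    (3 * codewordWeight π α β γ : ℝ) = 2 * (3 ^ m - (expSum 3 m α β γ).re) := by
  let _ := Fintype.ofFinite (GaloisField 3 m)
  have card_eq : Fintype.card (GaloisField 3 m) = 3 ^ m := by
    rw [← Nat.card_eq_fintype_card, GaloisField.card 3 m hm]
  have weight_eq : codewordWeight π α β γ =
      #{x | dembowskiOstromForm (ZMod 3) ![α, β, γ] x ≠ 0} := by
    rw [← card_filter_range_pow hπ _ (by simp), card_eq, codewordWeight]
    simp [dembowskiOstromForm_apply, Fin.sum_univ_three, ← pow_mul, mul_comm]
  rw [weight_eq, three_mul_card_filter_ne_zero, card_eq, expSum_eq_sum_stdAddChar]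
  push_cast; rfl

theorem codewordWeight_eq_iff_re_eq (hm : m ≠ 0) {π : (GaloisField 3 m)ˣ}
    (hπ : ∀ u, u ∈ Subgroup.zpowers π) (α β γ : GaloisField 3 m) (r : ℤ) :
    (codewordWeight π α β γ : ℤ) = 2 * 3 ^ (m - 1) - 2 * r ↔
      (expSum 3 m α β γ).re = r * 3 := by
  have weight := three_mul_codewordWeight hm hπ α β γ
  have pow_m : (3 : ℝ) ^ m = 3 * 3 ^ (m - 1) := (mul_pow_sub_one hm 3).symm
  rw [← @Int.cast_inj ℝ]
  push_cast
  constructor <;> intro h <;> linarith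

theorem codewordWeight_eq_iff_expSum_eq_nval (hm : Even m) (hm0 : m ≠ 0)
    {π : (GaloisField 3 m)ˣ} (hπ : ∀ u, u ∈ Subgroup.zpowers π) {j : ℕ} (hj : Even j) (ε : ℤˣ)
    (α β γ : GaloisField 3 m) :
    (codewordWeight π α β γ : ℤ) = 2 * 3 ^ (m - 1) - 2 * (ε * 3 ^ ((m + j) / 2 - 1)) ↔
      expSum 3 m α β γ = nval 3 m ε j := by
  have exponent_ne_zero : (m + j) / 2 ≠ 0 := by grind
  rw [codewordWeight_eq_iff_re_eq hm0 hπ, expSum_eq_nval_iff_re_eq rfl hm hm0 hj]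
  push_cast
  rw [mul_assoc, pow_sub_one_mul exponent_ne_zero]

end Weight

theorem ncard_setOf_exists_eq {X Y ι : Type*} [Finite X] (P : X → Prop) (f : X → Y) {g : ι → Y}
    (hg : Function.Injective g) (s : Finset ι) :
    {x | P x ∧ ∃ i ∈ s, f x = g i}.ncard = ∑ i ∈ s, {x | P x ∧ f x = g i}.ncard := by
  have disjoint : (s : Set ι).PairwiseDisjoint fun i => {x | P x ∧ f x = g i} :=
    fun i _ j _ hij => Set.disjoint_left.2 fun x hi hj => hij (hg (hi.2.symm.trans hj.2))
  rw [← finsum_mem_coe_finset, ← s.finite_toSet.ncard_biUnion (fun _ _ => Set.toFinite _) disjoint]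
  congr 1
  ext x
  simp only [Set.mem_ofPred_eq, Set.mem_iUnion, mem_coe, exists_prop]
  tauto

theorem weight_counts_general {m : ℕ} (hm : Even m) (hm0 : m ≠ 0) {π : (GaloisField 3 m)ˣ}
    (hπ : ∀ u, u ∈ Subgroup.zpowers π) :
    ({t : GaloisField 3 m × GaloisField 3 m × GaloisField 3 m |
        t ≠ (0, 0, 0) ∧ codewordWeight π t.1 t.2.1 t.2.2 = 2 * 3 ^ (m - 1)}.ncard =
      nn 3 m 1 1 + nn 3 m (-1) 1 + nn 3 m 1 3 + nn 3 m (-1) 3) ∧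
    ∀ j, Even j → j ≤ m →
      ({t : GaloisField 3 m × GaloisField 3 m × GaloisField 3 m | t ≠ (0, 0, 0) ∧
          codewordWeight π t.1 t.2.1 t.2.2 = 2 * 3 ^ (m - 1) - 2 * 3 ^ ((m + j) / 2 - 1)}.ncard =
        nn 3 m 1 j) ∧
      ({t : GaloisField 3 m × GaloisField 3 m × GaloisField 3 m | t ≠ (0, 0, 0) ∧
          codewordWeight π t.1 t.2.1 t.2.2 = 2 * 3 ^ (m - 1) + 2 * 3 ^ ((m + j) / 2 - 1)}.ncard =
        nn 3 m (-1) j) := by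
  refine ⟨?_, fun j hj hjm => ⟨?_, ?_⟩⟩
  · have weight_iff (t : GaloisField 3 m × GaloisField 3 m × GaloisField 3 m) (ht : t ≠ (0, 0, 0)) :
        codewordWeight π t.1 t.2.1 t.2.2 = 2 * 3 ^ (m - 1) ↔
          ∃ i ∈ (univ ×ˢ {1, 3} : Finset (ℤˣ × ℕ)),
            expSum 3 m t.1 t.2.1 t.2.2 = nval 3 m i.1 i.2 := by
      rw [← expSum_re_eq_zero_iff rfl hm hm0 ht]
      simpa [← @Nat.cast_inj ℤ] using codewordWeight_eq_iff_re_eq hm0 hπ t.1 t.2.1 t.2.2 0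
    simp only [and_congr_right (weight_iff _)]
    rw [ncard_setOf_exists_eq _ _ (nval_injective (by norm_num) m), sum_product, UnitsInt.univ]
    simp only [nn, mem_singleton, OfNat.one_ne_ofNat, not_false_eq_true, sum_insert,
      sum_singleton, units_ne_neg_self, Units.val_one, Units.val_neg, Int.reduceNeg]
    ring
  · have pow_le : 3 ^ ((m + j) / 2 - 1) ≤ 3 ^ (m - 1) := Nat.pow_le_pow_right (by simp) (by lia)
    simp only [nn]
    congr! 4 with t
    rw [← @Nat.cast_inj ℤ, Nat.cast_sub (by lia)]
    simpa using codewordWeight_eq_iff_expSum_eq_nval hm hm0 hπ hj 1 t.1 t.2.1 t.2.2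
  · simp only [nn]
    congr! 4 with t
    rw [← @Nat.cast_inj ℤ]
    simpa using codewordWeight_eq_iff_expSum_eq_nval hm hm0 hπ hj (-1) t.1 t.2.1 t.2.2

theorem weight_counts (m : ℕ) (hme : Even m) (hm6 : 6 ≤ m)
    (π : (GaloisField 3 m)ˣ)
    (hπ : ∀ u : (GaloisField 3 m)ˣ, u ∈ Subgroup.zpowers π) :
    letI : Fact (Nat.Prime 3) := ⟨by norm_num⟩
    let w : GaloisField 3 m × GaloisField 3 m × GaloisField 3 m → ℕ := fun t =>
      ((Finset.range (3 ^ m - 1)).filter (fun i =>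
        (Algebra.trace (ZMod 3) (GaloisField 3 m))
          (t.1 * (π : GaloisField 3 m) ^ (2 * i) +
           t.2.1 * (π : GaloisField 3 m) ^ (4 * i) +
           t.2.2 * (π : GaloisField 3 m) ^ (10 * i)) ≠ 0)).card
    ({t : GaloisField 3 m × GaloisField 3 m × GaloisField 3 m |
        t ≠ (0, 0, 0) ∧ w t = 2 * 3 ^ (m - 1)}.ncard =
      nn 3 m 1 1 + nn 3 m (-1) 1 + nn 3 m 1 3 + nn 3 m (-1) 3) ∧
    ∀ j ∈ ({0, 2, 4} : Set ℕ),
      ({t : GaloisField 3 m × GaloisField 3 m × GaloisField 3 m |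
          t ≠ (0, 0, 0) ∧ w t = 2 * 3 ^ (m - 1) - 2 * 3 ^ ((m + j) / 2 - 1)}.ncard =
        nn 3 m 1 j) ∧
      ({t : GaloisField 3 m × GaloisField 3 m × GaloisField 3 m |
          t ≠ (0, 0, 0) ∧ w t = 2 * 3 ^ (m - 1) + 2 * 3 ^ ((m + j) / 2 - 1)}.ncard =
        nn 3 m (-1) j) := by
  have general := weight_counts_general hme (by lia) hπ
  refine ⟨general.1, ?_⟩
  rintro j (rfl | rfl | rfl) <;> exact general.2 _ (by decide) (by lia)
end

section
/- Let p = 3 and q = 3^m with m an even positive integer, and let A_j' denote the number of codewords of Hamming weight j in the dual code C^⊥. Then A_0' = 1, A_1' = 0, A_2' = 3^m − 1, A_3' = 0, and A_4' = (3^m − 1)(2·3^m − 6)/3 + (3^m − 1)(3^m − 3)/2. -/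
/-!
Label the positions by the units `u` of `K = F_q` and put `y = u²`. A word `v` lies in `C^⊥` iff the
weighted power sums `p_k = ∑ v(u) y^k` vanish for `k = 1, 2, 5`, hence also for `k = 3, 6` by
Frobenius. As in the BCH bound, `p₁ = p₂ = p₃ = 0` forces a word of weight at most `3` to sum to
zero over every fibre `{u, -u}` of squaring, that is, to be odd; conversely, all odd words lie in
`C^⊥`. For a word of weight `4` that is not odd, `p₄ ≠ 0`, and the linear recurrence satisfied by
`p₁, …, p₆` makes the first two elementary symmetric functions of its four values `y` vanish.
Combined with `p₁ = p₂ = 0`, the same BCH argument then shows that the word is constant on its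
support, and that the support represents, up to sign, the four points `x, y, x + y, x - y` of a line
of the projective space of `K` over `F_3`. Both kinds of words are counted through pairs of
independent points: such a pair `(x, y)` lies in one two-element set without antipodal points, and
in four sets representing a line.
-/

open Finset

section PowerSums

theorem sum_fiber_eq_zero {ι F K : Type*} [Field F] [Field K] [Algebra F K] [DecidableEq K]
    {s : Finset ι} {c : ι → F} {x : ι → K} {d : ℕ} (hx : ∀ i ∈ s, x i ≠ 0)
    (hd : #(s.image x) ≤ d) (hc : ∀ k < d, ∑ i ∈ s, c i • x i ^ (k + 1) = 0) (a : K) :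
    ∑ i ∈ s with x i = a, c i = 0 := by
  by_cases ha : a ∈ s.image x
  · set L := Lagrange.basis (s.image x) id a
    have hL : L.natDegree < d := by
      rw [Lagrange.natDegree_basis (Set.injOn_id _) ha]
      have := card_pos.mpr ⟨a, ha⟩
      omega
    have hLx : ∀ i ∈ s, x i * L.eval (x i) = if x i = a then a else 0 := by
      intro i hi
      split_ifs with hia
      · have := Lagrange.eval_basis_self (Set.injOn_id _) ha
        rw [hia, show L.eval a = 1 from this, mul_one]
      · have := Lagrange.eval_basis_of_ne (v := id) (Ne.symm hia) (mem_image_of_mem x hi)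
        rw [show L.eval (x i) = 0 from this, mul_zero]
    have hsum : (∑ i ∈ s with x i = a, c i) • a = 0 := calc
      _ = ∑ i ∈ s, c i • (x i * L.eval (x i)) := by
        rw [sum_smul, sum_filter]
        exact sum_congr rfl fun i hi => by rw [hLx i hi, smul_ite, smul_zero]
      _ = ∑ k ∈ range d, L.coeff k * ∑ i ∈ s, c i • x i ^ (k + 1) := by
        simp only [Polynomial.eval_eq_sum_range' hL, mul_sum, smul_sum]
        rw [sum_comm]
        refine sum_congr rfl fun k _ => sum_congr rfl fun i _ => ?_
        rw [mul_smul_comm, pow_succ]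
        ring_nf
      _ = 0 := sum_eq_zero fun k hk => by rw [hc k (mem_range.mp hk), mul_zero]
    obtain ⟨i, hi, rfl⟩ := mem_image.mp ha
    exact (smul_eq_zero.mp hsum).resolve_right (hx i hi)
  · exact sum_eq_zero fun i hi =>
      (ha (mem_image.mpr ⟨i, (mem_filter.mp hi).1, (mem_filter.mp hi).2⟩)).elim

theorem exists_sum_eq_of_card_eq_four {ι : Type*} {s : Finset ι} (hs : #s = 4) (R : Type*)
    [AddCommMonoid R] : ∃ i j k l, ∀ f : ι → R, ∑ n ∈ s, f n = f i + f j + f k + f l := by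
  classical
  obtain ⟨i, j, k, l, hij, hik, hil, hjk, hjl, hkl, rfl⟩ := card_eq_four.mp hs
  refine ⟨i, j, k, l, fun f => ?_⟩
  rw [sum_insert (by simp [*]), sum_insert (by simp [*]), sum_pair hkl, add_assoc, add_assoc]

theorem sum_eq_zero_and_sum_sq_eq_zero_of_card_eq_four {ι R : Type*} [CommRing R] [IsDomain R]
    {s : Finset ι} (hs : #s = 4) {c x : ι → R} (h1 : ∑ i ∈ s, c i * x i = 0)
    (h2 : ∑ i ∈ s, c i * x i ^ 2 = 0) (h3 : ∑ i ∈ s, c i * x i ^ 3 = 0)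
    (h4 : ∑ i ∈ s, c i * x i ^ 4 ≠ 0) (h5 : ∑ i ∈ s, c i * x i ^ 5 = 0)
    (h6 : ∑ i ∈ s, c i * x i ^ 6 = 0) :
    ∑ i ∈ s, x i = 0 ∧ ∑ i ∈ s, x i ^ 2 = 0 := by
  obtain ⟨i, j, k, l, hsum⟩ := exists_sum_eq_of_card_eq_four hs R
  simp only [hsum] at *
  generalize x i = w, x j = x, x k = y, x l = z at *
  set e₁ := w + x + y + z
  set e₂ := w * x + w * y + w * z + x * y + x * z + y * z
  set e₃ := w * x * y + w * x * z + w * y * z + x * y * z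
  set e₄ := w * x * y * z
  -- The weighted power sums satisfy the recurrence with characteristic polynomial `∏ (X - x i)`.
  have he₁ : e₁ = 0 := by
    refine (mul_eq_zero.mp ?_).resolve_right h4
    linear_combination h5 + e₂ * h3 - e₃ * h2 + e₄ * h1
  have he₂ : e₂ = 0 := by
    refine (mul_eq_zero.mp ?_).resolve_right h4
    linear_combination e₁ * h5 - h6 + e₃ * h3 - e₄ * h2
  exact ⟨he₁, by linear_combination e₁ * he₁ - 2 * he₂⟩

theorem sum_pow_five_eq_zero_of_card_eq_four {ι R : Type*} [CommRing R] [IsDomain R]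
    (hR : (2 : R) ≠ 0) {s : Finset ι} (hs : #s = 4) {x : ι → R} (h1 : ∑ i ∈ s, x i = 0)
    (h2 : ∑ i ∈ s, x i ^ 2 = 0) : ∑ i ∈ s, x i ^ 5 = 0 := by
  obtain ⟨i, j, k, l, hsum⟩ := exists_sum_eq_of_card_eq_four hs R
  simp only [hsum] at *
  generalize x i = w, x j = x, x k = y, x l = z at *
  have he₂ : w * x + w * y + w * z + x * y + x * z + y * z = 0 := by
    refine (mul_eq_zero.mp ?_).resolve_left hR
    linear_combination (w + x + y + z) * h1 - h2
  linear_combination (w ^ 4 + x ^ 4 + y ^ 4 + z ^ 4 - w * x * y * z) * h1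
    - (w ^ 3 + x ^ 3 + y ^ 3 + z ^ 3) * he₂
    + (w * x * y + w * x * z + w * y * z + x * y * z) * h2

theorem sum_smul_pow_mul_card {ι F A : Type*} [Field F] [Fintype F] [CommRing A] [Algebra F A]
    (s : Finset ι) (c : ι → F) (x : ι → A) (k : ℕ) :
    ∑ i ∈ s, c i • x i ^ (k * Fintype.card F) = (∑ i ∈ s, c i • x i ^ k) ^ Fintype.card F := by
  rw [← congrFun (FiniteField.coe_frobeniusAlgHom F A), map_sum]
  simp only [map_smul, FiniteField.coe_frobeniusAlgHom, pow_mul]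

end PowerSums

section OddWords

theorem unit_neg_ne_self {R : Type*} [Ring R] (hR : (2 : R) ≠ 0) (u : Rˣ) : -u ≠ u := by
  intro h
  have : 2 * (u : R) = 0 := by
    rw [two_mul, ← neg_eq_iff_add_eq_zero, ← Units.val_neg, h]
  exact hR (u.mul_left_eq_zero.mp this)

theorem odd_of_hammingNorm_le {F K : Type*} [Field F] [DecidableEq F] [Field K] [Fintype Kˣ]
    [Algebra F K] (hK : (2 : K) ≠ 0) {v : Kˣ → F} {d : ℕ} (hd : hammingNorm v ≤ d)
    (hv : ∀ k < d, ∑ u, v u • ((u : K) ^ 2) ^ (k + 1) = 0) : Function.Odd v := by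
  classical
  intro a
  have hfib : ∑ u with v u ≠ 0 ∧ (u : K) ^ 2 = (a : K) ^ 2, v u = 0 := by
    rw [← filter_filter]
    refine sum_fiber_eq_zero (c := v) (fun u _ => pow_ne_zero 2 u.ne_zero) (card_image_le.trans hd)
      (fun k hk => ?_) _
    rw [← hv k hk]
    exact sum_filter_of_ne fun u _ h hu => h (by rw [hu, zero_smul])
  have hpair : ({u | (u : K) ^ 2 = (a : K) ^ 2} : Finset Kˣ) = {a, -a} := by
    ext u
    simp [sq_eq_sq_iff_eq_or_eq_neg, Units.ext_iff]
  simp only [and_comm (b := _ ^ 2 = _ ^ 2)] at hfib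
  rw [← filter_filter, sum_filter_ne_zero, hpair, sum_pair (unit_neg_ne_self hK a).symm] at hfib
  exact eq_neg_of_add_eq_zero_right hfib

theorem sum_smul_pow_eq_zero_of_odd {F R : Type*} [Ring F] [CommRing R] [NoZeroDivisors R]
    [Fintype Rˣ] [Module F R] (hR : (2 : R) ≠ 0) {v : Rˣ → F} (hv : Function.Odd v) {k : ℕ}
    (hk : Even k) : ∑ u, v u • (u : R) ^ k = 0 := by
  have h : ∑ u, v u • (u : R) ^ k = -∑ u, v u • (u : R) ^ k := calc
    _ = ∑ u, v (-u) • ((-u : Rˣ) : R) ^ k := (Equiv.sum_comp (Equiv.neg Rˣ) _).symm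
    _ = -∑ u, v u • (u : R) ^ k := by simp [hv.eq, hk.neg_pow]
  refine (mul_eq_zero.mp ?_).resolve_left hR
  linear_combination h

end OddWords

section ZModThree

theorem sum_filter_eq_of_ne_zero {ι M : Type*} [AddCommGroup M] [Module (ZMod 3) M]
    (s : Finset ι) (v : ι → ZMod 3) {c : ZMod 3} (hc : c ≠ 0) (x : ι → M) :
    ∑ i ∈ s with v i = c, x i = -∑ i ∈ s with v i ≠ 0, x i - c • ∑ i ∈ s, v i • x i := by
  have hscalar : ∀ a c : ZMod 3, c ≠ 0 →
      (if a = c then 1 else 0) = -(if a ≠ 0 then 1 else 0) - c * a := by decide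
  rw [sum_filter, sum_filter, smul_sum, ← sum_neg_distrib, ← sum_sub_distrib]
  refine sum_congr rfl fun i _ => ?_
  simpa [sub_smul, mul_smul] using congrArg (· • x i) (hscalar (v i) c hc)

theorem sum_indicator_const_smul {ι R M : Type*} [Fintype ι] [Semiring R] [AddCommMonoid M]
    [Module R M] (P : Finset ι) (c : R) (x : ι → M) :
    ∑ i, (P : Set ι).indicator (fun _ => c) i • x i = c • ∑ i ∈ P, x i := by
  classical
  simp [Set.indicator_apply, ite_smul, smul_sum]

theorem hammingNorm_indicator_const {ι R : Type*} [Fintype ι] [Zero R] [DecidableEq R]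
    (P : Finset ι) {c : R} (hc : c ≠ 0) :
    hammingNorm ((P : Set ι).indicator fun _ => c) = #P := by
  classical
  simp [hammingNorm, Set.indicator_apply, hc]

theorem not_odd_indicator_const {α : Type*} [Neg α] {P : Set α} (hP : P.Nonempty) {c : ZMod 3}
    (hc : c ≠ 0) : ¬ Function.Odd (P.indicator fun _ => c) := by
  classical
  obtain ⟨u, hu⟩ := hP
  have hneg : ∀ c : ZMod 3, c ≠ 0 → -c ≠ 0 ∧ -c ≠ c := by decide
  intro hodd
  have := hodd u
  by_cases hu' : -u ∈ P <;> simp_all [eq_comm]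

theorem three_eq_zero_of_algebra (R : Type*) [Ring R] [Algebra (ZMod 3) R] : (3 : R) = 0 := by
  have h := congrArg (algebraMap (ZMod 3) R) (show (3 : ZMod 3) = 0 by decide)
  rwa [map_ofNat, map_zero] at h

theorem two_ne_zero_of_algebra (R : Type*) [CommRing R] [Nontrivial R] [Algebra (ZMod 3) R] :
    (2 : R) ≠ 0 :=
  fun h => one_ne_zero (α := R) (by linear_combination three_eq_zero_of_algebra R - h)

theorem sum_smul_pow_mul_three {ι R : Type*} [CommRing R] [Algebra (ZMod 3) R] (s : Finset ι)
    (c : ι → ZMod 3) (x : ι → R) (k : ℕ) :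
    ∑ i ∈ s, c i • x i ^ (k * 3) = (∑ i ∈ s, c i • x i ^ k) ^ 3 := by
  simpa [ZMod.card] using sum_smul_pow_mul_card s c x k

theorem eq_add_sq_and_eq_sub_sq_or {R : Type*} [CommRing R] [IsDomain R]
    [Algebra (ZMod 3) R] {x y c d : R} (h1 : x ^ 2 + y ^ 2 + c + d = 0)
    (h2 : x ^ 4 + y ^ 4 + c ^ 2 + d ^ 2 = 0) :
    (c = (x + y) ^ 2 ∧ d = (x - y) ^ 2) ∨ (d = (x + y) ^ 2 ∧ c = (x - y) ^ 2) := by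
  have h3 := three_eq_zero_of_algebra R
  have hprod : (c - (x + y) ^ 2) * (c - (x - y) ^ 2) = 0 := by
    linear_combination 2 * h2 - 2 * (d - x ^ 2 - y ^ 2 - c) * h1 - (x ^ 2 + y ^ 2 + c) ^ 2 * h3
  rcases mul_eq_zero.mp hprod with hc | hc
  · exact .inl ⟨by linear_combination hc, by linear_combination h1 - hc - (x ^ 2 + y ^ 2) * h3⟩
  · exact .inr ⟨by linear_combination h1 - hc - (x ^ 2 + y ^ 2) * h3, by linear_combination hc⟩

theorem four_le_card_image_sq {K : Type*} [Field K] [Algebra (ZMod 3) K] [DecidableEq K]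
    {P : Finset Kˣ} (hP : P.Nonempty) (h2 : ∑ u ∈ P, (u : K) ^ 2 = 0)
    (h4 : ∑ u ∈ P, (u : K) ^ 4 = 0) : 4 ≤ #(P.image fun u : Kˣ => (u : K) ^ 2) := by
  by_contra! h
  have h6 : ∑ u ∈ P, (u : K) ^ 6 = 0 := by simpa [h2] using sum_smul_pow_mul_three P 1 Units.val 2
  obtain ⟨a, ha⟩ := hP
  have hfib : (#{u ∈ P | ((u : Kˣ) : K) ^ 2 = (a : K) ^ 2} : ZMod 3) = 0 := by
    have := sum_fiber_eq_zero (c := fun _ => (1 : ZMod 3)) (fun u (_ : u ∈ P) =>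
      pow_ne_zero 2 u.ne_zero) (Nat.lt_succ_iff.mp h) (fun k hk => ?_) ((a : K) ^ 2)
    · simpa using this
    · simp only [one_smul, ← pow_mul]
      interval_cases k <;> assumption
  have hpos : 0 < #{u ∈ P | ((u : Kˣ) : K) ^ 2 = (a : K) ^ 2} := card_pos.mpr ⟨a, by simp [ha]⟩
  have hle : #{u ∈ P | ((u : Kˣ) : K) ^ 2 = (a : K) ^ 2} ≤ 2 := by
    refine (card_le_card (t := {a, -a}) fun u hu => ?_).trans card_le_two
    simpa [sq_eq_sq_iff_eq_or_eq_neg, Units.ext_iff] using (mem_filter.mp hu).2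
  rw [ZMod.natCast_eq_zero_iff] at hfib
  omega

end ZModThree

section AntipodeFree

variable {α : Type*} [Fintype α]

theorem hammingNorm_eq_two_mul_card_of_odd [InvolutiveNeg α] {v : α → ZMod 3}
    (hv : Function.Odd v) : hammingNorm v = 2 * #{u | v u = 1} := by
  classical
  have hval : ∀ a : ZMod 3, a ≠ 0 ↔ a = 1 ∨ -a = 1 := by decide
  have hneg : #{u | v (-u) = 1} = #{u | v u = 1} :=
    card_equiv (Equiv.neg α) fun u => by simp
  have hdisj : Disjoint ({u | v u = 1} : Finset α) ({u | v (-u) = 1} : Finset α) := by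
    simp only [disjoint_filter, hv.eq]
    intro u _ hu
    rw [hu]
    decide
  calc
    _ = #(({u | v u = 1} : Finset α) ∪ ({u | v (-u) = 1} : Finset α)) := by
      simp only [hammingNorm, hval, hv.eq, filter_or]
    _ = 2 * #{u | v u = 1} := by rw [card_union_of_disjoint hdisj, hneg, two_mul]

variable [DecidableEq α]

variable (α) in
/-- The `k`-element sets containing no two antipodal points `u` and `-u`. -/
def antipodeFree [Neg α] (k : ℕ) : Finset (Finset α) :=
  {P | #P = k ∧ ∀ u ∈ P, -u ∉ P}

theorem mem_antipodeFree [Neg α] {k : ℕ} {P : Finset α} :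
    P ∈ antipodeFree α k ↔ #P = k ∧ ∀ u ∈ P, -u ∉ P := by
  simp [antipodeFree]

theorem antipodeFree_zero [Neg α] : antipodeFree α 0 = {∅} := by
  ext P
  simp +contextual [mem_antipodeFree]

theorem card_antipodeFree_one [Neg α] (hneg : ∀ a : α, -a ≠ a) :
    #(antipodeFree α 1) = Fintype.card α := by
  have : antipodeFree α 1 = univ.map ⟨_, singleton_injective⟩ := by
    ext P
    simp only [mem_antipodeFree, card_eq_one, mem_map, mem_univ, true_and]
    constructor
    · rintro ⟨⟨a, rfl⟩, -⟩
      exact ⟨a, rfl⟩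
    · rintro ⟨a, rfl⟩
      exact ⟨⟨a, rfl⟩, by simp [hneg]⟩
  rw [this, card_map, card_univ]

theorem ncard_odd_hammingNorm_eq_two_mul [InvolutiveNeg α] (k : ℕ) :
    {v : α → ZMod 3 | Function.Odd v ∧ hammingNorm v = 2 * k}.ncard = #(antipodeFree α k) := by
  rw [← Set.ncard_coe_finset]
  refine Set.ncard_congr (fun v _ => ({u | v u = 1} : Finset α)) ?_ ?_ ?_
  · rintro v ⟨hv, hk⟩
    rw [hammingNorm_eq_two_mul_card_of_odd hv] at hk
    refine mem_antipodeFree.mpr ⟨by omega, fun u hu => ?_⟩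
    rw [mem_filter_univ] at hu ⊢
    rw [hv.eq, hu]
    decide
  · rintro v w ⟨hv, -⟩ ⟨hw, -⟩ heq
    funext u
    have hpos : v u = 1 ↔ w u = 1 := by simpa using Finset.ext_iff.mp heq u
    have hneg : -v u = 1 ↔ -w u = 1 := by simpa [hv.eq, hw.eq] using Finset.ext_iff.mp heq (-u)
    generalize v u = a, w u = b at *
    revert a b
    decide
  · intro P hP
    obtain ⟨hcard, hfree⟩ := mem_antipodeFree.mp hP
    let v : α → ZMod 3 := fun u => if u ∈ P then 1 else if -u ∈ P then -1 else 0
    have hvP : ({u | v u = 1} : Finset α) = P := by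
      ext u
      simp only [v, mem_filter_univ]
      have : (-1 : ZMod 3) ≠ 1 := by decide
      split_ifs <;> simp_all
    have hv : Function.Odd v := by
      intro u
      have := hfree u
      by_cases hu : u ∈ P <;> by_cases hu' : -u ∈ P <;> simp_all [v]
    exact ⟨v, ⟨hv, by rw [hammingNorm_eq_two_mul_card_of_odd hv, hvP, hcard]⟩, hvP⟩

theorem card_filter_ne_and_ne_neg [Neg α] (hneg : ∀ a : α, -a ≠ a) :
    #{p : α × α | p.2 ≠ p.1 ∧ p.2 ≠ -p.1} = Fintype.card α * (Fintype.card α - 2) := by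
  have hfib (x : α) : ∑ y, (if y ≠ x ∧ y ≠ -x then 1 else 0) = Fintype.card α - 2 := by
    rw [← card_filter, ← card_pair (hneg x).symm, ← card_compl]
    congr 1
    ext y
    simp
  rw [card_filter, Fintype.sum_prod_type, sum_congr rfl fun x _ => hfib x, sum_const, card_univ,
    smul_eq_mul]

theorem card_mul_card_sub_two_mul_eq [Neg α] (hneg : ∀ a : α, -a ≠ a) {k l : ℕ}
    {𝓑 : Finset (Finset α)} (h𝓑 : 𝓑 ⊆ antipodeFree α k)
    (hl : ∀ x y, y ≠ x → y ≠ -x → #{P ∈ 𝓑 | x ∈ P ∧ y ∈ P} = l) :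
    Fintype.card α * (Fintype.card α - 2) * l = #𝓑 * (k * k - k) := by
  rw [← card_filter_ne_and_ne_neg hneg]
  refine card_mul_eq_card_mul (fun (p : α × α) P => p.1 ∈ P ∧ p.2 ∈ P)
    (fun p hp => hl p.1 p.2 (mem_filter.mp hp).2.1 (mem_filter.mp hp).2.2) fun P hP => ?_
  obtain ⟨rfl, hfree⟩ := mem_antipodeFree.mp (h𝓑 hP)
  rw [← offDiag_card]
  congr 1
  ext ⟨x, y⟩
  simp only [mem_bipartiteBelow, mem_filter_univ, mem_offDiag]
  constructor
  · rintro ⟨⟨hyx, -⟩, hx, hy⟩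
    exact ⟨hx, hy, hyx.symm⟩
  · rintro ⟨hx, hy, hxy⟩
    exact ⟨⟨hxy.symm, fun h => hfree x hx (h ▸ hy)⟩, hx, hy⟩

theorem two_mul_card_antipodeFree_two [InvolutiveNeg α] (hneg : ∀ a : α, -a ≠ a) :
    2 * #(antipodeFree α 2) = Fintype.card α * (Fintype.card α - 2) := by
  have h := card_mul_card_sub_two_mul_eq hneg (subset_refl (antipodeFree α 2)) (l := 1)
    fun x y hyx hyx' => card_eq_one.mpr ⟨{x, y}, ?_⟩
  · rw [mul_one] at h
    rw [h, mul_comm]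
  ext P
  simp only [mem_filter, mem_antipodeFree, mem_singleton]
  constructor
  · rintro ⟨⟨hcard, -⟩, hx, hy⟩
    exact (eq_of_subset_of_card_le (by simp [insert_subset_iff, hx, hy])
      (by rw [hcard, card_pair hyx.symm])).symm
  · rintro rfl
    have hxy' : x ≠ -y := fun h => hyx' (by rw [h, neg_neg])
    simp [card_pair hyx.symm, hneg, hyx'.symm, hxy'.symm]

end AntipodeFree

section LineTransversals

variable {K : Type*} [Field K]

section Definition

variable [DecidableEq K] [Fintype Kˣ]

variable (K) in
/-- The four-element sets of units with vanishing sums of squares and of fourth powers. They are the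
systems of representatives up to sign of the points `x, y, x + y, x - y` of a line of the projective
space of `K` over `F_3`, and the supports of the words of weight `4` in `C^⊥` that are not odd. -/
def lineTransversals : Finset (Finset Kˣ) :=
  {P | #P = 4 ∧ ∑ u ∈ P, (u : K) ^ 2 = 0 ∧ ∑ u ∈ P, (u : K) ^ 4 = 0}

theorem mem_lineTransversals {P : Finset Kˣ} : P ∈ lineTransversals K ↔
    #P = 4 ∧ ∑ u ∈ P, (u : K) ^ 2 = 0 ∧ ∑ u ∈ P, (u : K) ^ 4 = 0 := by
  simp [lineTransversals]

end Definition

variable [Algebra (ZMod 3) K]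

variable {x y z w : Kˣ}

theorem ne_of_sq_eq_add_sq (hyx : y ≠ x) (hz : (z : K) ^ 2 = (x + y) ^ 2) : x ≠ z := by
  rintro rfl
  have hsub : (y : K) - x ≠ 0 := sub_ne_zero.mpr (Units.ext_iff.ne.mp hyx)
  exact mul_ne_zero y.ne_zero hsub (by linear_combination -hz - x * y * three_eq_zero_of_algebra K)

theorem nodup_of_sq_eq_add_sq_of_sq_eq_sub_sq (hyx : y ≠ x) (hyx' : y ≠ -x)
    (hz : (z : K) ^ 2 = (x + y) ^ 2) (hw : (w : K) ^ 2 = (x - y) ^ 2) : [x, y, z, w].Nodup := by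
  have hxz : x ≠ z := ne_of_sq_eq_add_sq hyx hz
  have hyz : y ≠ z := ne_of_sq_eq_add_sq hyx.symm (by rw [hz, add_comm])
  have hxw : x ≠ w := ne_of_sq_eq_add_sq (y := -y) (fun h => hyx' (neg_eq_iff_eq_neg.mp h))
    (by rw [hw, Units.val_neg, sub_eq_add_neg])
  have hyw : y ≠ w := ne_of_sq_eq_add_sq (y := -x) hyx'.symm
    (by rw [hw, Units.val_neg, ← sub_eq_add_neg, sub_sq_comm])
  have hzw : z ≠ w := by
    rintro rfl
    exact mul_ne_zero x.ne_zero y.ne_zero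
      (by linear_combination hw - hz - x * y * three_eq_zero_of_algebra K)
  simp [hyx.symm, hxz, hxw, hyz, hyw, hzw]

variable [DecidableEq K] [Fintype Kˣ]

theorem insert_mem_lineTransversals (hyx : y ≠ x) (hyx' : y ≠ -x)
    (hz : (z : K) ^ 2 = (x + y) ^ 2) (hw : (w : K) ^ 2 = (x - y) ^ 2) :
    {x, y, z, w} ∈ lineTransversals K := by
  have h3 := three_eq_zero_of_algebra K
  have hnodup := nodup_of_sq_eq_add_sq_of_sq_eq_sub_sq hyx hyx' hz hw
  simp only [List.nodup_cons, List.mem_cons, List.not_mem_nil, or_false, not_or] at hnodup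
  obtain ⟨⟨hxy, hxz, hxw⟩, ⟨hyz, hyw⟩, hzw, -⟩ := hnodup
  have hsum (f : Kˣ → K) : ∑ u ∈ {x, y, z, w}, f u = f x + (f y + (f z + f w)) := by
    rw [sum_insert (by simp [*]), sum_insert (by simp [*]), sum_pair hzw]
  refine mem_lineTransversals.mpr ⟨card_eq_four.mpr ⟨x, y, z, w, hxy, hxz, hxw, hyz, hyw, hzw, rfl⟩,
    ?_, ?_⟩
  · rw [hsum]
    linear_combination hz + hw + (x ^ 2 + y ^ 2 : K) * h3
  · rw [hsum]
    linear_combination (z ^ 2 + (x + y) ^ 2) * hz + (w ^ 2 + (x - y) ^ 2) * hw +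
      (x ^ 4 + y ^ 4 + 4 * x ^ 2 * y ^ 2 : K) * h3

theorem exists_eq_insert_of_mem_lineTransversals {P : Finset Kˣ} (hP : P ∈ lineTransversals K)
    (hx : x ∈ P) (hy : y ∈ P) (hyx : y ≠ x) :
    ∃ z w : Kˣ, (z : K) ^ 2 = (x + y) ^ 2 ∧ (w : K) ^ 2 = (x - y) ^ 2 ∧ P = {x, y, z, w} := by
  obtain ⟨hcard, h2, h4⟩ := mem_lineTransversals.mp hP
  have hyP : y ∈ P.erase x := mem_erase.mpr ⟨hyx, hy⟩
  have hcard2 : #((P.erase x).erase y) = 2 := by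
    rw [card_erase_of_mem hyP, card_erase_of_mem hx, hcard]
  obtain ⟨z, w, hzw, hQ⟩ := card_eq_two.mp hcard2
  have hPeq : P = {x, y, z, w} := by rw [← hQ, insert_erase hyP, insert_erase hx]
  have hsum (f : Kˣ → K) : ∑ u ∈ P, f u = f x + (f y + (f z + f w)) := by
    rw [← add_sum_erase P f hx, ← add_sum_erase _ f hyP, hQ, sum_pair hzw]
  rw [hsum] at h2 h4
  rcases eq_add_sq_and_eq_sub_sq_or (x := (x : K)) (y := y) (c := z ^ 2) (d := w ^ 2)
    (by linear_combination h2) (by linear_combination h4) with ⟨hz, hw⟩ | ⟨hw, hz⟩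
  · exact ⟨z, w, hz, hw, hPeq⟩
  · exact ⟨w, z, hw, hz, by rw [hPeq, pair_comm]⟩

theorem card_filter_mem_lineTransversals (hyx : y ≠ x) (hyx' : y ≠ -x) :
    #{P ∈ lineTransversals K | x ∈ P ∧ y ∈ P} = 4 := by
  have hadd : (x + y : K) ≠ 0 := fun h =>
    hyx' (Units.ext (by simpa using eq_neg_of_add_eq_zero_right h))
  have hsub : (x - y : K) ≠ 0 := fun h => hyx (Units.ext (sub_eq_zero.mp h).symm)
  set a := Units.mk0 _ hadd
  set b := Units.mk0 _ hsub
  have hneg := unit_neg_ne_self (two_ne_zero_of_algebra K)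
  have hpair {u c : Kˣ} : u ∈ ({c, -c} : Finset Kˣ) ↔ (u : K) ^ 2 = c ^ 2 := by
    simp [sq_eq_sq_iff_eq_or_eq_neg, Units.ext_iff]
  have himage : {P ∈ lineTransversals K | x ∈ P ∧ y ∈ P} =
      (({a, -a} : Finset Kˣ) ×ˢ ({b, -b} : Finset Kˣ)).image fun p => {x, y, p.1, p.2} := by
    ext P
    simp only [mem_filter, mem_image, mem_product, hpair, Prod.exists]
    constructor
    · rintro ⟨hP, hx, hy⟩
      obtain ⟨z, w, hz, hw, rfl⟩ := exists_eq_insert_of_mem_lineTransversals hP hx hy hyx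
      exact ⟨z, w, ⟨hz, hw⟩, rfl⟩
    · rintro ⟨z, w, ⟨hz, hw⟩, rfl⟩
      exact ⟨insert_mem_lineTransversals hyx hyx' hz hw, by simp, by simp⟩
  rw [himage, card_image_of_injOn, card_product, card_pair (hneg a).symm,
    card_pair (hneg b).symm]
  rintro ⟨z, w⟩ h ⟨z', w'⟩ h' heq
  simp only [mem_coe, mem_product, hpair] at h h' heq
  have := nodup_of_sq_eq_add_sq_of_sq_eq_sub_sq hyx hyx' h.1 h.2
  have := nodup_of_sq_eq_add_sq_of_sq_eq_sub_sq hyx hyx' h.1 h'.2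
  have := nodup_of_sq_eq_add_sq_of_sq_eq_sub_sq hyx hyx' h'.1 h.2
  have hz : z ∈ ({x, y, z', w'} : Finset Kˣ) := by simp [← heq]
  have hw : w ∈ ({x, y, z', w'} : Finset Kˣ) := by simp [← heq]
  simp_all [eq_comm]

theorem lineTransversals_subset_antipodeFree : lineTransversals K ⊆ antipodeFree Kˣ 4 := by
  intro P hP
  obtain ⟨hcard, h2, h4⟩ := mem_lineTransversals.mp hP
  have hinj : Set.InjOn (fun u : Kˣ => (u : K) ^ 2) P :=
    card_image_iff.mp (card_image_le.antisymm
      (hcard ▸ four_le_card_image_sq (card_pos.mp (by omega)) h2 h4))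
  exact mem_antipodeFree.mpr ⟨hcard, fun u hu hu' => unit_neg_ne_self (two_ne_zero_of_algebra K) u
    (hinj hu' hu (by simp))⟩

theorem three_mul_card_lineTransversals :
    3 * #(lineTransversals K) = Fintype.card Kˣ * (Fintype.card Kˣ - 2) := by
  have h := card_mul_card_sub_two_mul_eq (unit_neg_ne_self (two_ne_zero_of_algebra K))
    lineTransversals_subset_antipodeFree
    fun x y => card_filter_mem_lineTransversals
  omega

end LineTransversals

section DualCode

variable {K : Type*} [Field K] [Fintype Kˣ] [Algebra (ZMod 3) K]

variable (K) in
/-- The dual code `C^⊥`, with positions labelled by the units `u` of `K` instead of the exponents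
`i` of `u = π ^ i`, and encoded by its parity checks: by nondegeneracy of the trace form, a word is
orthogonal to all words `Tr (α u² + β u⁴ + γ u¹⁰)` iff its sums against `u²`, `u⁴`, `u¹⁰` vanish. -/
def dualCode : Submodule (ZMod 3) (Kˣ → ZMod 3) :=
  ⨅ k ∈ ({2, 4, 10} : Set ℕ),
    LinearMap.ker (Fintype.linearCombination (ZMod 3) fun u : Kˣ => (u : K) ^ k)

theorem mem_dualCode {v : Kˣ → ZMod 3} : v ∈ dualCode K ↔
    ∑ u, v u • (u : K) ^ 2 = 0 ∧ ∑ u, v u • (u : K) ^ 4 = 0 ∧ ∑ u, v u • (u : K) ^ 10 = 0 := by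
  simp [dualCode, Fintype.linearCombination_apply]

theorem mem_dualCode_of_odd {v : Kˣ → ZMod 3} (hv : Function.Odd v) : v ∈ dualCode K :=
  have h {k : ℕ} (hk : Even k) := sum_smul_pow_eq_zero_of_odd (two_ne_zero_of_algebra K) hv hk
  mem_dualCode.mpr ⟨h (by decide), h (by decide), h (by decide)⟩

theorem odd_of_mem_dualCode_of_hammingNorm_lt_four {v : Kˣ → ZMod 3} (hv : v ∈ dualCode K)
    (hd : hammingNorm v < 4) : Function.Odd v := by
  obtain ⟨h2, h4, -⟩ := mem_dualCode.mp hv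
  have h6 : ∑ u, v u • (u : K) ^ 6 = 0 := by
    simpa [h2] using sum_smul_pow_mul_three univ v Units.val 2
  refine odd_of_hammingNorm_le (two_ne_zero_of_algebra K) (Nat.lt_succ_iff.mp hd) fun k hk => ?_
  simp only [← pow_mul]
  interval_cases k <;> assumption

theorem indicator_const_mem_dualCode [DecidableEq K] {P : Finset Kˣ}
    (hP : P ∈ lineTransversals K) (c : ZMod 3) :
    (P : Set Kˣ).indicator (fun _ => c) ∈ dualCode K := by
  obtain ⟨hcard, h2, h4⟩ := mem_lineTransversals.mp hP
  have h10 := sum_pow_five_eq_zero_of_card_eq_four (two_ne_zero_of_algebra K) hcard h2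
    (by simpa [← pow_mul])
  simp only [← pow_mul] at h10
  simp only [mem_dualCode, sum_indicator_const_smul]
  simp_all

theorem sum_support_eq_zero_of_mem_dualCode {v : Kˣ → ZMod 3} (hv : v ∈ dualCode K)
    (hv4 : hammingNorm v = 4) (hodd : ¬ Function.Odd v) :
    ∑ u with v u ≠ 0, (u : K) ^ 2 = 0 ∧ ∑ u with v u ≠ 0, (u : K) ^ 4 = 0 := by
  obtain ⟨h2, h4, h10⟩ := mem_dualCode.mp hv
  have h6 : ∑ u, v u • (u : K) ^ 6 = 0 := by
    simpa [h2] using sum_smul_pow_mul_three univ v Units.val 2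
  have h12 : ∑ u, v u • (u : K) ^ 12 = 0 := by
    simpa [h4] using sum_smul_pow_mul_three univ v Units.val 4
  have h8 : ∑ u, v u • (u : K) ^ 8 ≠ 0 := by
    refine fun h8 => hodd (odd_of_hammingNorm_le (two_ne_zero_of_algebra K)
      hv4.le fun k hk => ?_)
    simp only [← pow_mul]
    interval_cases k <;> assumption
  have hsupp (k : ℕ) : ∑ u with v u ≠ 0, algebraMap (ZMod 3) K (v u) * ((u : K) ^ 2) ^ k =
      ∑ u, v u • (u : K) ^ (2 * k) := by
    simp only [pow_mul, Algebra.smul_def]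
    exact sum_filter_of_ne fun u _ h hu => h (by simp [hu])
  have h := sum_eq_zero_and_sum_sq_eq_zero_of_card_eq_four hv4 (by simpa [h2] using hsupp 1)
    (by simpa [h4] using hsupp 2) (by simpa [h6] using hsupp 3) (by simpa [hsupp 4] using h8)
    (by simpa [h10] using hsupp 5) (by simpa [h12] using hsupp 6)
  simpa only [← pow_mul] using h

theorem exists_eq_indicator_const_of_mem_dualCode [DecidableEq K] {v : Kˣ → ZMod 3}
    (hv : v ∈ dualCode K) (hv4 : hammingNorm v = 4) (hodd : ¬ Function.Odd v) :
    ∃ c ≠ 0, ∃ P ∈ lineTransversals K, v = (P : Set Kˣ).indicator fun _ => c := by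
  obtain ⟨h2, h4, -⟩ := mem_dualCode.mp hv
  obtain ⟨hs2, hs4⟩ := sum_support_eq_zero_of_mem_dualCode hv hv4 hodd
  obtain ⟨u, hu⟩ : ∃ u, v u ≠ 0 := by
    by_contra! h
    exact hodd fun u => by simp [h]
  have hP2 : ∑ w with v w = v u, (w : K) ^ 2 = 0 := by
    rw [sum_filter_eq_of_ne_zero _ _ hu, hs2, h2, smul_zero, sub_zero, neg_zero]
  have hP4 : ∑ w with v w = v u, (w : K) ^ 4 = 0 := by
    rw [sum_filter_eq_of_ne_zero _ _ hu, hs4, h4, smul_zero, sub_zero, neg_zero]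
  have hcard : 4 ≤ #{w | v w = v u} :=
    (four_le_card_image_sq ⟨u, by simp⟩ hP2 hP4).trans card_image_le
  have hP : ({w | v w = v u} : Finset Kˣ) = ({w | v w ≠ 0} : Finset Kˣ) :=
    eq_of_subset_of_card_le (monotone_filter_right _ fun w _ hw => hw ▸ hu) (hv4.trans_le hcard)
  refine ⟨v u, hu, ({w | v w = v u} : Finset Kˣ),
    mem_lineTransversals.mpr ⟨by rw [hP]; exact hv4, hP2, hP4⟩, ?_⟩
  ext w
  have hmem : v w = v u ↔ v w ≠ 0 := by simpa using Finset.ext_iff.mp hP w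
  by_cases hw : v w = v u
  · simp [hw]
  · simpa [hw] using hmem.not.mp hw

end DualCode

section WeightCounts

theorem ncard_indicator_const {α R : Type*} [Fintype R] [DecidableEq R] [Zero R]
    {𝓑 : Finset (Finset α)} (h𝓑 : ∀ P ∈ 𝓑, P.Nonempty) :
    {v : α → R | ∃ c ≠ 0, ∃ P ∈ 𝓑, v = (P : Set α).indicator fun _ => c}.ncard =
      #{c : R | c ≠ 0} * #𝓑 := by
  rw [← card_product, ← Set.ncard_coe_finset]
  refine (Set.BijOn.ncard_eq (f := fun p => (p.2 : Set α).indicator fun _ => p.1)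
    ⟨?_, ?_, ?_⟩).symm
  · rintro ⟨c, P⟩ h
    simp only [mem_coe, mem_product, mem_filter_univ] at h
    exact ⟨c, h.1, P, h.2, rfl⟩
  · rintro ⟨c, P⟩ h ⟨d, Q⟩ h' heq
    simp only [mem_coe, mem_product, mem_filter_univ] at h h' heq
    have hsupp {c : R} (hc : c ≠ 0) (P : Set α) :
        Function.support (P.indicator fun _ => c) = P := by
      rw [Set.support_indicator, Function.support_const hc, Set.inter_univ]
    have hPQ : P = Q := by
      rw [← coe_inj, ← hsupp h.1 P, heq, hsupp h'.1]
    subst hPQ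
    obtain ⟨u, hu⟩ := h𝓑 P h.2
    simpa [hu] using congrFun heq u
  · rintro v ⟨c, hc, P, hP, rfl⟩
    exact ⟨(c, P), by simp [hc, hP], rfl⟩

theorem ncard_odd_hammingNorm_of_odd {α : Type*} [Fintype α] [InvolutiveNeg α] {j : ℕ}
    (hj : Odd j) : {v : α → ZMod 3 | Function.Odd v ∧ hammingNorm v = j}.ncard = 0 := by
  rw [Set.ncard_eq_zero, Set.eq_empty_iff_forall_notMem]
  rintro v ⟨hv, rfl⟩
  rw [hammingNorm_eq_two_mul_card_of_odd hv] at hj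
  exact Nat.not_odd_iff_even.mpr (even_two_mul _) hj

variable {K : Type*} [Field K] [Fintype Kˣ] [Algebra (ZMod 3) K]

theorem ncard_dualCode_hammingNorm_of_lt_four {j : ℕ} (hj : j < 4) :
    {v | v ∈ dualCode K ∧ hammingNorm v = j}.ncard =
      {v : Kˣ → ZMod 3 | Function.Odd v ∧ hammingNorm v = j}.ncard := by
  congr 1
  ext v
  refine and_congr_left fun hv => ⟨fun h => ?_, mem_dualCode_of_odd⟩
  exact odd_of_mem_dualCode_of_hammingNorm_lt_four h (hv.trans_lt hj)

theorem ncard_dualCode_hammingNorm_zero :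
    {v | v ∈ dualCode K ∧ hammingNorm v = 0}.ncard = 1 := by
  classical
  rw [ncard_dualCode_hammingNorm_of_lt_four (by decide), ncard_odd_hammingNorm_eq_two_mul 0,
    antipodeFree_zero, card_singleton]

theorem ncard_dualCode_hammingNorm_two :
    {v | v ∈ dualCode K ∧ hammingNorm v = 2}.ncard = Fintype.card Kˣ := by
  classical
  rw [ncard_dualCode_hammingNorm_of_lt_four (by decide), ncard_odd_hammingNorm_eq_two_mul 1,
    card_antipodeFree_one (unit_neg_ne_self (two_ne_zero_of_algebra K))]

theorem ncard_dualCode_hammingNorm_of_odd_of_lt_four {j : ℕ} (hodd : Odd j) (hj : j < 4) :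
    {v | v ∈ dualCode K ∧ hammingNorm v = j}.ncard = 0 := by
  rw [ncard_dualCode_hammingNorm_of_lt_four hj, ncard_odd_hammingNorm_of_odd hodd]

theorem ncard_dualCode_hammingNorm_four_eq_card_add_two_mul_card [DecidableEq K] :
    {v | v ∈ dualCode K ∧ hammingNorm v = 4}.ncard =
      #(antipodeFree Kˣ 2) + 2 * #(lineTransversals K) := by
  have hne : ∀ P ∈ lineTransversals K, P.Nonempty := fun P hP =>
    card_pos.mp (by simp [(mem_lineTransversals.mp hP).1])
  have hunion : {v | v ∈ dualCode K ∧ hammingNorm v = 4} =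
      {v | Function.Odd v ∧ hammingNorm v = 4} ∪ {v : Kˣ → ZMod 3 |
        ∃ c ≠ 0, ∃ P ∈ lineTransversals K, v = (P : Set Kˣ).indicator fun _ => c} := by
    ext v
    constructor
    · rintro ⟨hv, hv4⟩
      by_cases hodd : Function.Odd v
      · exact .inl ⟨hodd, hv4⟩
      · exact .inr (exists_eq_indicator_const_of_mem_dualCode hv hv4 hodd)
    · rintro (⟨hodd, hv4⟩ | ⟨c, hc, P, hP, rfl⟩)
      · exact ⟨mem_dualCode_of_odd hodd, hv4⟩
      · exact ⟨indicator_const_mem_dualCode hP c,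
          (hammingNorm_indicator_const P hc).trans (mem_lineTransversals.mp hP).1⟩
  have hdisj : Disjoint {v : Kˣ → ZMod 3 | Function.Odd v ∧ hammingNorm v = 4}
      {v | ∃ c ≠ 0, ∃ P ∈ lineTransversals K, v = (P : Set Kˣ).indicator fun _ => c} := by
    rw [Set.disjoint_left]
    rintro _ ⟨hodd, -⟩ ⟨c, hc, P, hP, rfl⟩
    exact not_odd_indicator_const (coe_nonempty.mpr (hne P hP)) hc hodd
  rw [hunion, Set.ncard_union_eq hdisj (Set.toFinite _) (Set.toFinite _),
    ncard_odd_hammingNorm_eq_two_mul 2, ncard_indicator_const hne]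
  rfl

theorem ncard_dualCode_hammingNorm_four :
    {v | v ∈ dualCode K ∧ hammingNorm v = 4}.ncard =
      Fintype.card Kˣ * (2 * (Fintype.card Kˣ - 2)) / 3 +
        Fintype.card Kˣ * (Fintype.card Kˣ - 2) / 2 := by
  classical
  have hpairs := two_mul_card_antipodeFree_two (unit_neg_ne_self (two_ne_zero_of_algebra K))
  have hlines := three_mul_card_lineTransversals (K := K)
  rw [ncard_dualCode_hammingNorm_four_eq_card_add_two_mul_card, mul_left_comm, ← hpairs]
  omega

end WeightCounts

section CyclicCode

theorem forall_sum_mul_trace_eq_zero_iff {ι F L : Type*} [Fintype ι] [Field F] [Field L]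
    [Algebra F L] [FiniteDimensional F L] [Algebra.IsSeparable F L] (v : ι → F) (a b c : ι → L) :
    (∀ t : L × L × L, ∑ i, v i *
        Algebra.trace F L (t.1 * a i + t.2.1 * b i + t.2.2 * c i) = 0) ↔
      ∑ i, v i • a i = 0 ∧ ∑ i, v i • b i = 0 ∧ ∑ i, v i • c i = 0 := by
  have htrace (t : L × L × L) : ∑ i, v i *
      Algebra.trace F L (t.1 * a i + t.2.1 * b i + t.2.2 * c i) = Algebra.trace F L
        (t.1 * ∑ i, v i • a i + t.2.1 * ∑ i, v i • b i + t.2.2 * ∑ i, v i • c i) := by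
    simp only [mul_sum, ← sum_add_distrib, map_sum, mul_smul_comm, ← smul_add, map_smul,
      smul_eq_mul]
  have hnondeg {s : L} (h : ∀ t, Algebra.trace F L (t * s) = 0) : s = 0 :=
    (traceForm_nondegenerate F L).2 s h
  simp only [htrace]
  refine ⟨fun h => ⟨hnondeg fun t => ?_, hnondeg fun t => ?_, hnondeg fun t => ?_⟩, ?_⟩
  · simpa using h (t, 0, 0)
  · simpa using h (0, t, 0)
  · simpa using h (0, 0, t)
  · rintro ⟨h1, h2, h3⟩ t
    simp [h1, h2, h3]

theorem exists_equiv_fin_eq_pow {G : Type*} [Group G] [Finite G] {g : G}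
    (hg : ∀ x, x ∈ Subgroup.zpowers g) {n : ℕ} (hn : Nat.card G = n) :
    ∃ e : Fin n ≃ G, ∀ i, e i = g ^ (i : ℕ) := by
  have := Fintype.ofFinite G
  have hord : orderOf g = n := (orderOf_eq_card_of_forall_mem_zpowers hg).trans hn
  have hinj : Function.Injective fun i : Fin n => g ^ (i : ℕ) := fun i j h =>
    Fin.ext (pow_injOn_Iio_orderOf (by simp [hord]) (by simp [hord]) h)
  have hbij := (Fintype.bijective_iff_injective_and_card _).mpr
    ⟨hinj, by rw [Fintype.card_fin, ← hn, Nat.card_eq_fintype_card]⟩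
  exact ⟨Equiv.ofBijective _ hbij, fun i => rfl⟩

theorem hammingNorm_comp_equiv {ι κ R : Type*} [Fintype ι] [Fintype κ] [Zero R] [DecidableEq R]
    (e : ι ≃ κ) (v : κ → R) : hammingNorm (v ∘ e) = hammingNorm v :=
  card_equiv e fun i => by simp

theorem ncard_forall_sum_mul_trace_eq_ncard_dualCode {ι K : Type*} [Fintype ι] [Field K] [Finite K]
    [Fintype Kˣ] [Algebra (ZMod 3) K] (e : ι ≃ Kˣ) (j : ℕ) :
    {v : ι → ZMod 3 | (∀ t : K × K × K, ∑ i, v i * Algebra.trace (ZMod 3) K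
        (t.1 * (e i : K) ^ 2 + t.2.1 * (e i : K) ^ 4 + t.2.2 * (e i : K) ^ 10) = 0) ∧
        hammingNorm v = j}.ncard =
      {v | v ∈ dualCode K ∧ hammingNorm v = j}.ncard := by
  have : Module.Finite (ZMod 3) K := Module.Finite.of_finite
  rw [← Set.ncard_preimage_of_injective_subset_range
    (f := fun v : ι → ZMod 3 => v ∘ e.symm) (e.symm.surjective.injective_comp_right)]
  · congr 1
    ext v
    rw [Set.mem_preimage, Set.mem_ofPred_eq, Set.mem_ofPred_eq, forall_sum_mul_trace_eq_zero_iff,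
      hammingNorm_comp_equiv, mem_dualCode]
    simp [← Equiv.sum_comp e]
  · exact fun v _ => ⟨v ∘ e, by simp [Function.comp_assoc]⟩

end CyclicCode

theorem dual_code_low_weights_general {K : Type*} [Field K] [Finite K] [Algebra (ZMod 3) K]
    (q : ℕ) (hq : Nat.card K = q) (π : Kˣ) (hπ : ∀ u : Kˣ, u ∈ Subgroup.zpowers π) :
    let cw : K × K × K → Fin (q - 1) → ZMod 3 := fun t i =>
      Algebra.trace (ZMod 3) K
        (t.1 * (π : K) ^ (2 * (i : ℕ)) + t.2.1 * (π : K) ^ (4 * (i : ℕ)) +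
          t.2.2 * (π : K) ^ (10 * (i : ℕ)))
    let A' : ℕ → ℕ := fun j =>
      {v : Fin (q - 1) → ZMod 3 |
        (∀ t : K × K × K, ∑ i, v i * cw t i = 0) ∧ hammingNorm v = j}.ncard
    A' 0 = 1 ∧ A' 1 = 0 ∧ A' 2 = q - 1 ∧ A' 3 = 0 ∧
      A' 4 = (q - 1) * (2 * q - 6) / 3 + (q - 1) * (q - 3) / 2 := by
  intro cw A'
  have := Fintype.ofFinite Kˣ
  have hcard : Nat.card Kˣ = q - 1 := by rw [Nat.card_units, hq]
  obtain ⟨e, he⟩ := exists_equiv_fin_eq_pow hπ hcard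
  have hA (j : ℕ) : A' j = {v | v ∈ dualCode K ∧ hammingNorm v = j}.ncard := by
    simp only [A', cw, ← ncard_forall_sum_mul_trace_eq_ncard_dualCode e, he,
      Units.val_pow_eq_pow_val, ← pow_mul']
  have hsub : 2 * q - 6 = 2 * (q - 3) := by omega
  refine ⟨?_, ?_, ?_, ?_, ?_⟩
  · rw [hA, ncard_dualCode_hammingNorm_zero]
  · rw [hA, ncard_dualCode_hammingNorm_of_odd_of_lt_four (j := 1) (by decide) (by decide)]
  · rw [hA, ncard_dualCode_hammingNorm_two, Fintype.card_eq_nat_card, hcard]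
  · rw [hA, ncard_dualCode_hammingNorm_of_odd_of_lt_four (j := 3) (by decide) (by decide)]
  · rw [hA, ncard_dualCode_hammingNorm_four, Fintype.card_eq_nat_card, hcard, Nat.sub_sub, hsub]

theorem dual_code_low_weights (m : ℕ) (hme : Even m) (hm0 : 0 < m)
    (π : (GaloisField 3 m)ˣ)
    (hπ : ∀ u : (GaloisField 3 m)ˣ, u ∈ Subgroup.zpowers π) :
    let cw : GaloisField 3 m × GaloisField 3 m × GaloisField 3 m →
        Fin (3 ^ m - 1) → ZMod 3 := fun t i =>
      (Algebra.trace (ZMod 3) (GaloisField 3 m))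
        (t.1 * (π : GaloisField 3 m) ^ (2 * (i : ℕ)) +
         t.2.1 * (π : GaloisField 3 m) ^ (4 * (i : ℕ)) +
         t.2.2 * (π : GaloisField 3 m) ^ (10 * (i : ℕ)))
    let A' : ℕ → ℕ := fun j =>
      {v : Fin (3 ^ m - 1) → ZMod 3 |
        (∀ t : GaloisField 3 m × GaloisField 3 m × GaloisField 3 m,
          ∑ i, v i * cw t i = 0) ∧ hammingNorm v = j}.ncard
    A' 0 = 1 ∧ A' 1 = 0 ∧ A' 2 = 3 ^ m - 1 ∧ A' 3 = 0 ∧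
      A' 4 = (3 ^ m - 1) * (2 * 3 ^ m - 6) / 3 + (3 ^ m - 1) * (3 ^ m - 3) / 2 :=
  dual_code_low_weights_general (3 ^ m) (GaloisField.card 3 m hm0.ne') π hπ
end
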